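/- arXiv:1502.06216 — 2 statements merged into one kernel-verified Lean document; each statement's English description precedes it below -/
import Mathlib

section
/- Let N ≥ 1, τ, γ > 0, let h : ℝ^N → ℝ ∪ {+∞} be proper, lower semicontinuous and convex, let w_1, w_2 ∈ ℝ^N, set λ = (1,1), and define ψ_1(a_1, a_2) = (τ/γ)( h(a_1 + a_2) + ⟨w_1, a_1⟩ + ⟨w_2, a_2⟩ ). Then for all strictly positive a_1, a_2 ∈ ℝ^N, setting ã_i = a_i ⊙ e^{−(τ/γ) w_i} (entrywise) and r = Prox^{KL}_{(τ/γ) h}(ã_1 + ã_2) (assumed to exist uniquely), one has Prox^{KL_λ}_{ψ_1}(a_1, a_2) = ( (r ⊘ (ã_1 + ã_2)) ⊙ ã_1, (r ⊘ (ã_1 + ã_2)) ⊙ ã_2 ). -/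
open scoped BigOperators

noncomputable section

def ProperLSCConvex {E : Type*} [AddCommGroup E] [Module ℝ E] [TopologicalSpace E]
    (f : E → EReal) : Prop :=
  (∀ x, f x ≠ ⊥) ∧ (∃ x, f x ≠ ⊤) ∧ LowerSemicontinuous f ∧
    ∀ x y : E, ∀ a b : ℝ, 0 ≤ a → 0 ≤ b → a + b = 1 →
      f (a • x + b • y) ≤ (a : EReal) * f x + (b : EReal) * f y

def KLvec {N : ℕ} (p q : Fin N → ℝ) : ℝ :=
  ∑ i, (p i * Real.log (p i / q i) - p i + q i)

def IsUniqMinOn {α β : Type*} [Preorder β] (F : α → β) (S : Set α) (x : α) : Prop :=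
  x ∈ S ∧ (∀ y ∈ S, F x ≤ F y) ∧ ∀ y ∈ S, (∀ z ∈ S, F y ≤ F z) → y = x

/-!
Tilting by `exp (-t w)` absorbs the linear terms of the objective into the reference measures. The
chain rule `KL_λ(P | q) = KL(P₁ + P₂ | q₁ + q₂) + KL_λ(P | S)`, where `S` splits the total
`P₁ + P₂` in the proportions `q₁ : q₂`, then writes the coupled objective at `P`, up to a constant,
as the one-marginal objective at `P₁ + P₂` plus a divergence which is nonnegative and vanishes
exactly when `P` is itself a proportional split. The proportional split of `r` is the one pair that
minimizes both terms at once.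
-/

open InformationTheory (klFun klFun_apply klFun_one klFun_nonneg klFun_eq_zero_iff)

namespace IsUniqMinOn

theorem ne_top_of_nontrivial {α β : Type*} [PartialOrder β] [OrderTop β] {F : α → β} {S : Set α}
    {x : α} (hx : IsUniqMinOn F S x) (hS : S.Nontrivial) : F x ≠ ⊤ := by
  intro htop
  obtain ⟨-, hmin, huniq⟩ := hx
  obtain ⟨y, hy, hyx⟩ := hS.exists_ne x
  have hall : ∀ z ∈ S, F z = ⊤ := fun z hz => top_le_iff.1 (htop ▸ hmin z hz)
  exact hyx (huniq y hy fun z hz => (hall z hz).symm ▸ le_top)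

theorem of_eq_comp_add {α β : Type*} {F : α → EReal} {G : β → EReal} {E : α → ℝ} {s : α → β}
    {T : Set α} {S : Set β} {x₀ : α} (hG : IsUniqMinOn G S (s x₀)) (hbot : G (s x₀) ≠ ⊥)
    (htop : G (s x₀) ≠ ⊤) (hs : Set.MapsTo s T S) (hF : ∀ x ∈ T, F x = G (s x) + (E x : EReal))
    (hx₀ : x₀ ∈ T) (hE : ∀ x ∈ T, E x₀ ≤ E x)
    (hEuniq : ∀ x ∈ T, s x = s x₀ → E x = E x₀ → x = x₀) : IsUniqMinOn F T x₀ := by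
  obtain ⟨-, hmin, huniq⟩ := hG
  have hE' (x) (hx : x ∈ T) : (E x₀ : EReal) ≤ E x := EReal.coe_le_coe_iff.2 (hE x hx)
  refine ⟨hx₀, fun x hx => ?_, fun x hx hxmin => ?_⟩
  · rw [hF x₀ hx₀, hF x hx]
    exact add_le_add (hmin _ (hs hx)) (hE' x hx)
  · have hle : G (s x) + (E x : EReal) ≤ G (s x₀) + (E x₀ : EReal) := by
      rw [← hF x hx, ← hF x₀ hx₀]
      exact hxmin x₀ hx₀
    have hGle : G (s x) ≤ G (s x₀) :=
      (EReal.addLECancellable_coe (E x₀)).add_le_add_iff_right.1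
        ((add_le_add_right (hE' x hx) _).trans hle)
    have hEle : E x ≤ E x₀ := by
      lift G (s x₀) to ℝ using ⟨htop, hbot⟩ with g hg
      exact EReal.coe_le_coe_iff.1 ((EReal.addLECancellable_coe g)
        ((add_le_add_left (hmin _ (hs hx)) _).trans hle))
    exact hEuniq x hx (huniq _ (hs hx) fun z hz => hGle.trans (hmin z hz))
      (hEle.antisymm (hE x hx))

end IsUniqMinOn

section KLvec

variable {N : ℕ} {p q u : Fin N → ℝ}

theorem KLvec_eq_sum_mul_klFun (hpq : ∀ i, q i = 0 → p i = 0) :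
    KLvec p q = ∑ i, q i * klFun (p i / q i) := by
  refine Finset.sum_congr rfl fun i _ => ?_
  by_cases hq : q i = 0
  · simp [hq, hpq i hq]
  · rw [klFun_apply]
    field_simp
    ring

theorem KLvec_nonneg (hp : 0 ≤ p) (hq : 0 ≤ q) (hpq : ∀ i, q i = 0 → p i = 0) :
    0 ≤ KLvec p q := by
  rw [KLvec_eq_sum_mul_klFun hpq]
  exact Finset.sum_nonneg fun i _ =>
    mul_nonneg (hq i) (klFun_nonneg (div_nonneg (hp i) (hq i)))

theorem KLvec_eq_zero_iff (hp : 0 ≤ p) (hq : 0 ≤ q) (hpq : ∀ i, q i = 0 → p i = 0) :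
    KLvec p q = 0 ↔ p = q := by
  have hdiv (i) : 0 ≤ p i / q i := div_nonneg (hp i) (hq i)
  rw [KLvec_eq_sum_mul_klFun hpq, Finset.sum_eq_zero_iff_of_nonneg
    fun i _ => mul_nonneg (hq i) (klFun_nonneg (hdiv i)), funext_iff]
  refine ⟨fun h i => ?_, fun h i _ => ?_⟩
  · rcases mul_eq_zero.1 (h i (Finset.mem_univ i)) with hqi | hkl
    · rw [hqi, hpq i hqi]
    · exact eq_of_div_eq_one ((klFun_eq_zero_iff (hdiv i)).1 hkl)
  · by_cases hqi : q i = 0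
    · rw [hqi, zero_mul]
    · rw [h i, div_self hqi, klFun_one, mul_zero]

theorem KLvec_mul_right (hq : ∀ i, q i ≠ 0) (hu : ∀ i, u i = 0 → p i = 0) :
    KLvec p (u * q) = KLvec p q - ∑ i, p i * Real.log (u i) + ∑ i, (u i * q i - q i) := by
  simp only [KLvec, ← Finset.sum_sub_distrib, ← Finset.sum_add_distrib]
  refine Finset.sum_congr rfl fun i _ => ?_
  by_cases hp : p i = 0
  · simp [hp]
  · have hui : u i ≠ 0 := mt (hu i) hp
    rw [Pi.mul_apply, Real.log_div hp (mul_ne_zero hui (hq i)), Real.log_mul hui (hq i),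
      Real.log_div hp (hq i)]
    ring

/-- The entrywise reweighting `a ⊙ e^{-t w}`, the vector `ã` of the theorem. -/
def expTilt (t : ℝ) (w a : Fin N → ℝ) : Fin N → ℝ :=
  fun i => a i * Real.exp (-t * w i)

theorem expTilt_pos {a : Fin N → ℝ} (ha : ∀ i, 0 < a i) (t : ℝ) (w : Fin N → ℝ) (i : Fin N) :
    0 < expTilt t w a i :=
  mul_pos (ha i) (Real.exp_pos _)

theorem KLvec_expTilt {a : Fin N → ℝ} (ha : ∀ i, a i ≠ 0) (t : ℝ) (w p : Fin N → ℝ) :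
    KLvec p (expTilt t w a) =
      KLvec p a + t * ∑ i, w i * p i + ∑ i, (expTilt t w a i - a i) := by
  have hmul : expTilt t w a = (fun i => Real.exp (-t * w i)) * a := funext fun i => mul_comm _ _
  have hlog : ∑ i, p i * Real.log (Real.exp (-t * w i)) = -(t * ∑ i, w i * p i) := by
    rw [Finset.mul_sum, ← Finset.sum_neg_distrib]
    refine Finset.sum_congr rfl fun i _ => ?_
    rw [Real.log_exp]
    ring
  rw [hmul, KLvec_mul_right ha fun i h => absurd h (Real.exp_ne_zero _), hlog, sub_neg_eq_add]
  rfl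

end KLvec

section KLpair

variable {N : ℕ} {P q : (Fin N → ℝ) × (Fin N → ℝ)}

/-- The divergence `KL_λ` between pairs of vectors, for `λ = (1, 1)`. -/
def KLpair (P q : (Fin N → ℝ) × (Fin N → ℝ)) : ℝ :=
  KLvec P.1 q.1 + KLvec P.2 q.2

/-- The pair of vectors with sum `s` whose entries are in the same proportions as those of `q`:
`((s ⊘ (q₁ + q₂)) ⊙ q₁, (s ⊘ (q₁ + q₂)) ⊙ q₂)`. -/
def proportionalSplit (q : (Fin N → ℝ) × (Fin N → ℝ)) (s : Fin N → ℝ) :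
    (Fin N → ℝ) × (Fin N → ℝ) :=
  (s / (q.1 + q.2) * q.1, s / (q.1 + q.2) * q.2)

theorem proportionalSplit_fst_add_snd (hq : ∀ i, q.1 i + q.2 i ≠ 0) (s : Fin N → ℝ) :
    (proportionalSplit q s).1 + (proportionalSplit q s).2 = s := by
  funext i
  simp only [proportionalSplit, Pi.add_apply, Pi.mul_apply, Pi.div_apply]
  rw [← mul_add, div_mul_cancel₀ _ (hq i)]

theorem proportionalSplit_nonneg (hq : 0 ≤ q) {s : Fin N → ℝ} (hs : 0 ≤ s) :
    0 ≤ proportionalSplit q s :=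
  have hdiv : 0 ≤ s / (q.1 + q.2) := fun i => div_nonneg (hs i) (add_nonneg (hq.1 i) (hq.2 i))
  ⟨mul_nonneg hdiv hq.1, mul_nonneg hdiv hq.2⟩

theorem eq_zero_of_add_div_add_eq_zero (hP : 0 ≤ P) (hq : ∀ i, q.1 i + q.2 i ≠ 0) {i : Fin N}
    (hi : ((P.1 + P.2) / (q.1 + q.2)) i = 0) : P.1 i = 0 ∧ P.2 i = 0 :=
  (add_eq_zero_iff_of_nonneg (hP.1 i) (hP.2 i)).1 ((div_eq_zero_iff.1 hi).resolve_right (hq i))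

theorem KLpair_eq_KLvec_add_KLpair_proportionalSplit (hP : 0 ≤ P) (hq₁ : ∀ i, 0 < q.1 i)
    (hq₂ : ∀ i, 0 < q.2 i) :
    KLpair P q =
      KLvec (P.1 + P.2) (q.1 + q.2) + KLpair P (proportionalSplit q (P.1 + P.2)) := by
  have hq (i) : q.1 i + q.2 i ≠ 0 := (add_pos (hq₁ i) (hq₂ i)).ne'
  have hzero {i} := eq_zero_of_add_div_add_eq_zero (i := i) hP hq
  simp only [KLpair, proportionalSplit]
  rw [KLvec_mul_right (fun i => (hq₁ i).ne') fun i hi => (hzero hi).1,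
    KLvec_mul_right (fun i => (hq₂ i).ne') fun i hi => (hzero hi).2]
  simp only [KLvec, ← Finset.sum_sub_distrib, ← Finset.sum_add_distrib]
  refine Finset.sum_congr rfl fun i _ => ?_
  have hsum := div_mul_cancel₀ (P.1 i + P.2 i) (hq i)
  simp only [Pi.add_apply, Pi.div_apply]
  linear_combination -hsum

theorem fst_eq_zero_of_proportionalSplit (hP : 0 ≤ P) (hq₁ : ∀ i, 0 < q.1 i)
    (hq₂ : ∀ i, 0 < q.2 i) (i : Fin N) (hi : (proportionalSplit q (P.1 + P.2)).1 i = 0) :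
    P.1 i = 0 :=
  (eq_zero_of_add_div_add_eq_zero hP (fun j => (add_pos (hq₁ j) (hq₂ j)).ne')
    ((mul_eq_zero.1 hi).resolve_right (hq₁ i).ne')).1

theorem snd_eq_zero_of_proportionalSplit (hP : 0 ≤ P) (hq₁ : ∀ i, 0 < q.1 i)
    (hq₂ : ∀ i, 0 < q.2 i) (i : Fin N) (hi : (proportionalSplit q (P.1 + P.2)).2 i = 0) :
    P.2 i = 0 :=
  (eq_zero_of_add_div_add_eq_zero hP (fun j => (add_pos (hq₁ j) (hq₂ j)).ne')
    ((mul_eq_zero.1 hi).resolve_right (hq₂ i).ne')).2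

theorem KLpair_proportionalSplit_nonneg (hP : 0 ≤ P) (hq₁ : ∀ i, 0 < q.1 i)
    (hq₂ : ∀ i, 0 < q.2 i) : 0 ≤ KLpair P (proportionalSplit q (P.1 + P.2)) := by
  obtain ⟨hS₁, hS₂⟩ := proportionalSplit_nonneg (q := q) ⟨fun i => (hq₁ i).le, fun i => (hq₂ i).le⟩
    (add_nonneg hP.1 hP.2)
  exact add_nonneg (KLvec_nonneg hP.1 hS₁ (fst_eq_zero_of_proportionalSplit hP hq₁ hq₂))
    (KLvec_nonneg hP.2 hS₂ (snd_eq_zero_of_proportionalSplit hP hq₁ hq₂))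

theorem KLpair_proportionalSplit_eq_zero_iff (hP : 0 ≤ P) (hq₁ : ∀ i, 0 < q.1 i)
    (hq₂ : ∀ i, 0 < q.2 i) :
    KLpair P (proportionalSplit q (P.1 + P.2)) = 0 ↔ P = proportionalSplit q (P.1 + P.2) := by
  obtain ⟨hS₁, hS₂⟩ := proportionalSplit_nonneg (q := q) ⟨fun i => (hq₁ i).le, fun i => (hq₂ i).le⟩
    (add_nonneg hP.1 hP.2)
  have hac₁ := fst_eq_zero_of_proportionalSplit hP hq₁ hq₂
  have hac₂ := snd_eq_zero_of_proportionalSplit hP hq₁ hq₂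
  rw [KLpair, add_eq_zero_iff_of_nonneg (KLvec_nonneg hP.1 hS₁ hac₁) (KLvec_nonneg hP.2 hS₂ hac₂),
    KLvec_eq_zero_iff hP.1 hS₁ hac₁, KLvec_eq_zero_iff hP.2 hS₂ hac₂, Prod.ext_iff]

end KLpair

section Objectives

variable {N : ℕ}

/-- The objective `KL(x | q) + t h(x)` whose minimizer over nonnegative vectors is
`Prox^{KL}_{t h}(q)`. -/
def proxObjective (t : ℝ) (h : (Fin N → ℝ) → EReal) (q x : Fin N → ℝ) : EReal :=
  (KLvec x q : EReal) + (t : EReal) * h x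

/-- The objective `KL_λ(P | a) + t (h(P₁ + P₂) + ⟨w₁, P₁⟩ + ⟨w₂, P₂⟩)` whose minimizer over pairs of
nonnegative vectors is `Prox^{KL_λ}_{ψ₁}(a)`, for `t = τ / γ`. -/
def couplingObjective (t : ℝ) (h : (Fin N → ℝ) → EReal) (w a P : (Fin N → ℝ) × (Fin N → ℝ)) :
    EReal :=
  (KLpair P a : EReal) +
    (t : EReal) * (h (P.1 + P.2) + ((∑ i, w.1 i * P.1 i + ∑ i, w.2 i * P.2 i : ℝ) : EReal))

/-- The pair `(ã₁, ã₂)` of tilted reference vectors. -/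
def expTiltPair (t : ℝ) (w a : (Fin N → ℝ) × (Fin N → ℝ)) : (Fin N → ℝ) × (Fin N → ℝ) :=
  (expTilt t w.1 a.1, expTilt t w.2 a.2)

variable {t : ℝ} {h : (Fin N → ℝ) → EReal} {w a P : (Fin N → ℝ) × (Fin N → ℝ)}

theorem proxObjective_ne_bot (ht : 0 ≤ t) {x : Fin N → ℝ} (hx : h x ≠ ⊥) (q : Fin N → ℝ) :
    proxObjective t h q x ≠ ⊥ :=
  EReal.add_ne_bot_iff.2 ⟨EReal.coe_ne_bot _, (EReal.mul_ne_bot _ _).2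
    ⟨.inl (EReal.coe_ne_bot t), .inr hx, .inl (EReal.coe_ne_top t), .inl (EReal.coe_nonneg.2 ht)⟩⟩

theorem KLpair_expTiltPair (ha₁ : ∀ i, a.1 i ≠ 0) (ha₂ : ∀ i, a.2 i ≠ 0) :
    KLpair P (expTiltPair t w a) =
      KLpair P a + t * (∑ i, w.1 i * P.1 i + ∑ i, w.2 i * P.2 i) +
        (∑ i, ((expTiltPair t w a).1 i - a.1 i) + ∑ i, ((expTiltPair t w a).2 i - a.2 i)) := by
  simp only [KLpair, expTiltPair, KLvec_expTilt ha₁, KLvec_expTilt ha₂]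
  ring

theorem couplingObjective_eq_proxObjective_add (ht : 0 ≤ t) (hP : 0 ≤ P) (ha₁ : ∀ i, 0 < a.1 i)
    (ha₂ : ∀ i, 0 < a.2 i) :
    couplingObjective t h w a P =
      proxObjective t h ((expTiltPair t w a).1 + (expTiltPair t w a).2) (P.1 + P.2) +
        ((KLpair P (proportionalSplit (expTiltPair t w a) (P.1 + P.2)) -
          (∑ i, ((expTiltPair t w a).1 i - a.1 i) +
            ∑ i, ((expTiltPair t w a).2 i - a.2 i)) : ℝ) : EReal) := by
  have htilt := KLpair_expTiltPair (t := t) (w := w) (P := P) (fun i => (ha₁ i).ne')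
    fun i => (ha₂ i).ne'
  have hchain := KLpair_eq_KLvec_add_KLpair_proportionalSplit (q := expTiltPair t w a) hP
    (expTilt_pos ha₁ t w.1) (expTilt_pos ha₂ t w.2)
  rw [couplingObjective, proxObjective, EReal.left_distrib_of_nonneg_of_ne_top
    (EReal.coe_nonneg.2 ht) (EReal.coe_ne_top t), add_left_comm, add_right_comm,
    ← EReal.coe_mul, ← EReal.coe_add, ← EReal.coe_add, add_comm]
  congr 2
  linarith

end Objectives

theorem KL_prox_summation_coupling_general {N : ℕ} [NeZero N] {t : ℝ} (ht : 0 ≤ t)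
    {h : (Fin N → ℝ) → EReal} {w a : (Fin N → ℝ) × (Fin N → ℝ)} (ha₁ : ∀ i, 0 < a.1 i)
    (ha₂ : ∀ i, 0 < a.2 i) {r : Fin N → ℝ} (hbot : h r ≠ ⊥)
    (hr : IsUniqMinOn
      (proxObjective t h ((expTiltPair t w a).1 + (expTiltPair t w a).2)) (Set.Ici 0) r) :
    IsUniqMinOn (couplingObjective t h w a) (Set.Ici 0)
      (proportionalSplit (expTiltPair t w a) r) := by
  set b := expTiltPair t w a
  have hb₁ : ∀ i, 0 < b.1 i := expTilt_pos ha₁ t w.1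
  have hb₂ : ∀ i, 0 < b.2 i := expTilt_pos ha₂ t w.2
  have hsum : (proportionalSplit b r).1 + (proportionalSplit b r).2 = r :=
    proportionalSplit_fst_add_snd (fun i => (add_pos (hb₁ i) (hb₂ i)).ne') r
  have hsplit : 0 ≤ proportionalSplit b r :=
    proportionalSplit_nonneg ⟨fun i => (hb₁ i).le, fun i => (hb₂ i).le⟩ hr.1
  have hzero := (KLpair_proportionalSplit_eq_zero_iff hsplit hb₁ hb₂).2 (by rw [hsum])
  have htop := hr.ne_top_of_nontrivial
    ⟨0, Set.self_mem_Ici, 1, Set.mem_Ici.2 zero_le_one, zero_ne_one⟩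
  refine IsUniqMinOn.of_eq_comp_add (s := fun P => P.1 + P.2) (hsum.symm ▸ hr)
    (hsum.symm ▸ proxObjective_ne_bot ht hbot _) (hsum.symm ▸ htop)
    (fun P hP => add_nonneg hP.1 hP.2)
    (fun P hP => couplingObjective_eq_proxObjective_add ht hP ha₁ ha₂) hsplit ?_ ?_
  · intro P hP
    exact sub_le_sub_right (hzero.le.trans (KLpair_proportionalSplit_nonneg hP hb₁ hb₂)) _
  · intro P hP hPr hE
    have hPsplit := (KLpair_proportionalSplit_eq_zero_iff hP hb₁ hb₂).1
      ((sub_left_inj.1 hE).trans hzero)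
    rwa [hPr.trans hsum] at hPsplit

/-- For `λ = (1,1)` and
`ψ₁(a₁,a₂) = (τ/γ)(h(a₁+a₂) + ⟨w₁,a₁⟩ + ⟨w₂,a₂⟩)`, setting `ã_i = a_i ⊙ e^{-(τ/γ)w_i}`
and `r = Prox^{KL}_{(τ/γ)h}(ã₁+ã₂)`, one has
`Prox^{KL_λ}_{ψ₁}(a₁,a₂) = ((r ⊘ (ã₁+ã₂)) ⊙ ã₁, (r ⊘ (ã₁+ã₂)) ⊙ ã₂)`. -/
theorem KL_prox_summation_coupling {N : ℕ} (hN : 1 ≤ N)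
    (τ γ : ℝ) (hτ : 0 < τ) (hγ : 0 < γ)
    (h : (Fin N → ℝ) → EReal) (hh : ProperLSCConvex h)
    (w₁ w₂ : Fin N → ℝ)
    (a₁ a₂ : Fin N → ℝ) (ha₁ : ∀ i, 0 < a₁ i) (ha₂ : ∀ i, 0 < a₂ i)
    (atil₁ atil₂ : Fin N → ℝ)
    (hatil₁ : atil₁ = fun i => a₁ i * Real.exp (-(τ / γ) * w₁ i))
    (hatil₂ : atil₂ = fun i => a₂ i * Real.exp (-(τ / γ) * w₂ i))
    (r : Fin N → ℝ)
    (hr : IsUniqMinOn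
      (fun x => ((KLvec x (fun i => atil₁ i + atil₂ i) : ℝ) : EReal) +
        ((τ / γ : ℝ) : EReal) * h x)
      {x : Fin N → ℝ | ∀ i, 0 ≤ x i} r) :
    IsUniqMinOn
      (fun Q : (Fin N → ℝ) × (Fin N → ℝ) =>
        ((KLvec Q.1 a₁ + KLvec Q.2 a₂ : ℝ) : EReal) +
          ((τ / γ : ℝ) : EReal) *
            (h (fun i => Q.1 i + Q.2 i) +
              ((∑ i, w₁ i * Q.1 i + ∑ i, w₂ i * Q.2 i : ℝ) : EReal)))
      {Q : (Fin N → ℝ) × (Fin N → ℝ) | (∀ i, 0 ≤ Q.1 i) ∧ ∀ i, 0 ≤ Q.2 i}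
      (fun i => r i / (atil₁ i + atil₂ i) * atil₁ i,
       fun i => r i / (atil₁ i + atil₂ i) * atil₂ i) := by
  subst hatil₁ hatil₂
  have : NeZero N := ⟨Nat.one_le_iff_ne_zero.1 hN⟩
  exact KL_prox_summation_coupling_general (w := (w₁, w₂)) (a := (a₁, a₂)) (div_pos hτ hγ).le
    ha₁ ha₂ (hh.1 r) hr
end
end

section
/- Let N ≥ 1, c ∈ ℝ^{N×N}, γ > 0, set ξ_{ij} = e^{−c_{ij}/γ}, and let p ∈ Σ_N have strictly positive entries. Then: (i) the unique minimizer of π ↦ ⟨c,π⟩ + γ E(π) over {π ∈ ℝ_+^{N×N} : π𝟙 = p} is π* = diag(p ⊘ (ξ𝟙)) ξ; and (ii) consequently, the function q ↦ W_γ(p,q) attains its minimum over Σ_N at the unique point q* = (π*)^T𝟙 = ξ^T( p ⊘ (ξ𝟙) ). In particular q* ≠ p in general, so W_γ(p,·) is not minimized at p. -/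
open scoped BigOperators

noncomputable section

def simplex (N : ℕ) : Set (Fin N → ℝ) :=
  {p | (∀ i, 0 ≤ p i) ∧ ∑ i, p i = 1}

def couplings {N : ℕ} (p q : Fin N → ℝ) : Set (Fin N → Fin N → ℝ) :=
  {π | (∀ i j, 0 ≤ π i j) ∧ (∀ i, ∑ j, π i j = p i) ∧ (∀ j, ∑ i, π i j = q j)}

def entropy {N : ℕ} (π : Fin N → Fin N → ℝ) : ℝ :=
  ∑ i, ∑ j, π i j * (Real.log (π i j) - 1)

def frob {N : ℕ} (c π : Fin N → Fin N → ℝ) : ℝ :=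
  ∑ i, ∑ j, c i j * π i j

def Wreg {N : ℕ} (c : Fin N → Fin N → ℝ) (γ : ℝ) (p q : Fin N → ℝ) : ℝ :=
  sInf ((fun π => frob c π + γ * entropy π) '' couplings p q)

/-!
The regularized cost of a plan `π` is the sum of the regularized costs of its rows, and prescribing
the first marginal constrains each row separately. On a single row of mass `m`, the cost of `x` is
`γ` times the Kullback-Leibler divergence of `x` from the Gibbs vector `m / (∑ₖ ξₖ) * ξ`, plus a
constant, so the Gibbs vector is the unique minimizer. Since `W_γ(p, ·)` minimizes the same
cost over the fibres of the second marginal, its unique minimizer is the second marginal of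
the optimal plan.
-/

open InformationTheory

namespace IsUniqMinOn

theorem sum_pi {ι β : Type*} [Fintype ι] {α : ι → Type*} [AddCommMonoid β] [PartialOrder β]
    [IsOrderedCancelAddMonoid β] {F : ∀ i, α i → β} {S : ∀ i, Set (α i)} {x : ∀ i, α i}
    (hx : ∀ i, IsUniqMinOn (F i) (S i) (x i)) :
    IsUniqMinOn (fun y => ∑ i, F i (y i)) (Set.univ.pi S) x := by
  have x_mem : x ∈ Set.univ.pi S := fun i _ => (hx i).1
  have le_F {y} (hy : y ∈ Set.univ.pi S) (i : ι) : F i (x i) ≤ F i (y i) :=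
    (hx i).2.1 (y i) (hy i trivial)
  refine ⟨x_mem, fun y hy => Finset.sum_le_sum fun i _ => le_F hy i, fun y hy y_min => ?_⟩
  have sum_eq : ∑ i, F i (x i) = ∑ i, F i (y i) :=
    (Finset.sum_le_sum fun i _ => le_F hy i).antisymm (y_min x x_mem)
  have F_eq : ∀ i ∈ Finset.univ, F i (x i) = F i (y i) :=
    (Finset.sum_eq_sum_iff_of_le fun i _ => le_F hy i).1 sum_eq
  funext i
  refine (hx i).2.2 (y i) (hy i trivial) fun z hz => ?_
  rw [← F_eq i (Finset.mem_univ i)]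
  exact (hx i).2.1 z hz

theorem of_isLeast_fiber {α β δ : Type*} [Preorder β] {F : α → β} {S : Set α} {x : α}
    (hx : IsUniqMinOn F S x) {g : α → δ} {T : Set δ} (hgx : g x ∈ T) {W : δ → β}
    (hW : ∀ q ∈ T, IsLeast (F '' {y ∈ S | g y = q}) (W q)) :
    IsUniqMinOn W T (g x) := by
  obtain ⟨x_mem, x_min, x_uniq⟩ := hx
  have W_le : W (g x) ≤ F x := (hW _ hgx).2 ⟨x, ⟨x_mem, rfl⟩, rfl⟩
  refine ⟨hgx, fun q hq => ?_, fun q hq q_min => ?_⟩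
  · obtain ⟨y, ⟨hyS, -⟩, hFy⟩ := (hW q hq).1
    rw [← hFy]
    exact W_le.trans (x_min y hyS)
  · obtain ⟨y, ⟨hyS, rfl⟩, hFy⟩ := (hW q hq).1
    have F_le : F y ≤ F x := hFy.trans_le ((q_min _ hgx).trans W_le)
    rw [x_uniq y hyS fun z hz => F_le.trans (x_min z hz)]

end IsUniqMinOn

theorem mul_klFun_div {x a : ℝ} (hac : a = 0 → x = 0) :
    a * klFun (x / a) = x * Real.log x - x * Real.log a + a - x := by
  rcases eq_or_ne a 0 with rfl | ha
  · simp [hac rfl]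
  rcases eq_or_ne x 0 with rfl | hx
  · simp [klFun_zero]
  rw [klFun_apply, Real.log_div hx ha]
  field_simp

section Rows

variable {ι : Type*} [Fintype ι]

/-- The Kullback-Leibler divergence of the nonnegative vector `x` from `a`, without normalization
of the masses. A coordinate with `a j = 0` contributes `0`, so the value is the usual one only
when `x` vanishes wherever `a` does. -/
def klDivergence (x a : ι → ℝ) : ℝ :=
  ∑ j, a j * klFun (x j / a j)

/-- The nonnegative vectors of total mass `m`. -/
def massSimplex (ι : Type*) [Fintype ι] (m : ℝ) : Set (ι → ℝ) :=
  {x | (∀ j, 0 ≤ x j) ∧ ∑ j, x j = m}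

/-- The contribution of one row `x` of a transport plan to the entropically regularized cost, where
`c` is the corresponding row of the cost matrix. -/
def entropicCost (c : ι → ℝ) (γ : ℝ) (x : ι → ℝ) : ℝ :=
  ∑ j, c j * x j + γ * ∑ j, x j * (Real.log (x j) - 1)

/-- The partition function, normalizing the Gibbs weights `exp (-c j / γ)` of one row. -/
def partitionFunction (c : ι → ℝ) (γ : ℝ) : ℝ :=
  ∑ j, Real.exp (-(c j) / γ)

/-- The vector of total mass `m` proportional to the Gibbs weights `exp (-c j / γ)`; it is the
minimizer of `entropicCost c γ` at mass `m`. -/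
def gibbsVector (c : ι → ℝ) (γ m : ℝ) : ι → ℝ :=
  fun j => m / partitionFunction c γ * Real.exp (-(c j) / γ)

theorem klDivergence_nonneg {x a : ι → ℝ} (hx : ∀ j, 0 ≤ x j) (ha : ∀ j, 0 ≤ a j) :
    0 ≤ klDivergence x a :=
  Finset.sum_nonneg fun j _ => mul_nonneg (ha j) (klFun_nonneg (div_nonneg (hx j) (ha j)))

theorem klDivergence_eq_zero_iff {x a : ι → ℝ} (hx : ∀ j, 0 ≤ x j) (ha : ∀ j, 0 ≤ a j)
    (hac : ∀ j, a j = 0 → x j = 0) : klDivergence x a = 0 ↔ x = a := by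
  have term_eq_zero_iff (j : ι) : a j * klFun (x j / a j) = 0 ↔ x j = a j := by
    rcases eq_or_ne (a j) 0 with h0 | h0
    · simp [h0, hac j h0]
    · rw [mul_eq_zero_iff_left h0, klFun_eq_zero_iff (div_nonneg (hx j) (ha j)),
        div_eq_one_iff_eq h0]
  rw [klDivergence, Finset.sum_eq_zero_iff_of_nonneg fun j _ =>
    mul_nonneg (ha j) (klFun_nonneg (div_nonneg (hx j) (ha j)))]
  simp only [Finset.mem_univ, true_imp_iff, term_eq_zero_iff, funext_iff]

theorem eq_zero_of_mem_massSimplex_zero {x : ι → ℝ} (hx : x ∈ massSimplex ι 0) : x = 0 :=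
  (Fintype.sum_eq_zero_iff_of_nonneg hx.1).1 hx.2

theorem isCompact_massSimplex (m : ℝ) : IsCompact (massSimplex ι m) := by
  have isCompact_box : IsCompact (Set.univ.pi fun _ : ι => Set.Icc 0 m) :=
    isCompact_univ_pi fun _ => isCompact_Icc
  refine isCompact_box.of_isClosed_subset ?_ ?_
  · simp only [massSimplex, Set.ofPred_and, Set.ofPred_forall]
    exact (isClosed_iInter fun j => isClosed_le continuous_const (continuous_apply j)).inter
      (isClosed_eq (by fun_prop) continuous_const)
  · rintro x ⟨x_nonneg, rfl⟩ j -
    exact ⟨x_nonneg j, Finset.single_le_sum (fun k _ => x_nonneg k) (Finset.mem_univ j)⟩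

theorem continuous_entropicCost (c : ι → ℝ) (γ : ℝ) : Continuous (entropicCost c γ) := by
  have continuous_mul_log_sub_one : Continuous fun t : ℝ => t * (Real.log t - 1) := by
    simp only [mul_sub, mul_one]
    exact Real.continuous_mul_log.sub continuous_id
  exact (by fun_prop : Continuous fun x : ι → ℝ => ∑ j, c j * x j).add (continuous_const.mul
    (continuous_finsetSum _ fun j _ => continuous_mul_log_sub_one.comp (continuous_apply j)))

theorem partitionFunction_pos [Nonempty ι] (c : ι → ℝ) (γ : ℝ) : 0 < partitionFunction c γ :=
  Finset.sum_pos (fun _ _ => Real.exp_pos _) Finset.univ_nonempty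

theorem sum_gibbsVector [Nonempty ι] (c : ι → ℝ) (γ m : ℝ) : ∑ j, gibbsVector c γ m j = m := by
  simp only [gibbsVector, ← Finset.mul_sum]
  exact div_mul_cancel₀ m (partitionFunction_pos c γ).ne'

theorem gibbsVector_mem_massSimplex [Nonempty ι] (c : ι → ℝ) (γ : ℝ) {m : ℝ} (hm : 0 ≤ m) :
    gibbsVector c γ m ∈ massSimplex ι m :=
  ⟨fun _ => mul_nonneg (div_nonneg hm (partitionFunction_pos c γ).le) (Real.exp_pos _).le,
    sum_gibbsVector c γ m⟩

theorem eq_zero_of_gibbsVector_eq_zero {c : ι → ℝ} {γ m : ℝ} {x : ι → ℝ}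
    (hx : x ∈ massSimplex ι m) {j : ι} (hj : gibbsVector c γ m j = 0) : x j = 0 := by
  have : Nonempty ι := ⟨j⟩
  obtain rfl : m = 0 := by
    simpa [gibbsVector, (partitionFunction_pos c γ).ne', Real.exp_ne_zero] using hj
  exact congrFun (eq_zero_of_mem_massSimplex_zero hx) j

theorem mul_log_gibbsVector (c : ι → ℝ) (γ : ℝ) {m : ℝ} {x : ι → ℝ} (hx : x ∈ massSimplex ι m)
    (j : ι) :
    x j * Real.log (gibbsVector c γ m j) =
      x j * (Real.log (m / partitionFunction c γ) - c j / γ) := by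
  by_cases hj : gibbsVector c γ m j = 0
  · simp [eq_zero_of_gibbsVector_eq_zero hx hj]
  · rw [gibbsVector, Real.log_mul (left_ne_zero_of_mul hj) (Real.exp_ne_zero _), Real.log_exp,
      neg_div, ← sub_eq_add_neg]

theorem entropicCost_eq_klDivergence_add [Nonempty ι] (c : ι → ℝ) {γ : ℝ} (hγ : γ ≠ 0) {m : ℝ}
    {x : ι → ℝ} (hx : x ∈ massSimplex ι m) :
    entropicCost c γ x = γ * klDivergence x (gibbsVector c γ m) +
      γ * (m * (Real.log (m / partitionFunction c γ) - 1)) := by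
  set logScale := Real.log (m / partitionFunction c γ)
  have kl_term (j : ι) :
      gibbsVector c γ m j * klFun (x j / gibbsVector c γ m j) =
        x j * (Real.log (x j) - 1) + c j * x j / γ - x j * logScale + gibbsVector c γ m j := by
    rw [mul_klFun_div (eq_zero_of_gibbsVector_eq_zero hx), mul_log_gibbsVector c γ hx]
    ring
  have kl_eq : klDivergence x (gibbsVector c γ m) =
      ∑ j, x j * (Real.log (x j) - 1) + (∑ j, c j * x j) / γ - m * logScale + m := by
    simp only [klDivergence, kl_term, Finset.sum_add_distrib, Finset.sum_sub_distrib,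
      ← Finset.sum_mul, ← Finset.sum_div, hx.2, sum_gibbsVector]
  rw [kl_eq, entropicCost]
  field_simp
  ring

theorem isUniqMinOn_entropicCost_gibbsVector [Nonempty ι] (c : ι → ℝ) {γ : ℝ} (hγ : 0 < γ)
    {m : ℝ} (hm : 0 ≤ m) :
    IsUniqMinOn (entropicCost c γ) (massSimplex ι m) (gibbsVector c γ m) := by
  have gibbs_mem := gibbsVector_mem_massSimplex c γ hm
  have cost_eq {x : ι → ℝ} (hx : x ∈ massSimplex ι m) :
      entropicCost c γ x =
        entropicCost c γ (gibbsVector c γ m) + γ * klDivergence x (gibbsVector c γ m) := by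
    have kl_self : klDivergence (gibbsVector c γ m) (gibbsVector c γ m) = 0 :=
      (klDivergence_eq_zero_iff gibbs_mem.1 gibbs_mem.1 fun _ => id).2 rfl
    rw [entropicCost_eq_klDivergence_add c hγ.ne' hx,
      entropicCost_eq_klDivergence_add c hγ.ne' gibbs_mem, kl_self]
    ring
  refine ⟨gibbs_mem, fun x hx => ?_, fun x hx x_min => ?_⟩
  · rw [cost_eq hx]
    exact le_add_of_nonneg_right (mul_nonneg hγ.le (klDivergence_nonneg hx.1 gibbs_mem.1))
  · have mul_kl_nonpos : γ * klDivergence x (gibbsVector c γ m) ≤ 0 := by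
      linarith [x_min _ gibbs_mem, cost_eq hx]
    have kl_eq_zero : klDivergence x (gibbsVector c γ m) = 0 :=
      (nonpos_of_mul_nonpos_right mul_kl_nonpos hγ).antisymm
        (klDivergence_nonneg hx.1 gibbs_mem.1)
    exact (klDivergence_eq_zero_iff hx.1 gibbs_mem.1
      fun _ => eq_zero_of_gibbsVector_eq_zero hx).1 kl_eq_zero

end Rows

section Plans

variable {N : ℕ}

/-- The nonnegative matrices whose first marginal (vector of row sums) is `p`. -/
def plansWithRowSums (p : Fin N → ℝ) : Set (Fin N → Fin N → ℝ) :=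
  {π | (∀ i j, 0 ≤ π i j) ∧ ∀ i, ∑ j, π i j = p i}

theorem plansWithRowSums_eq_pi (p : Fin N → ℝ) :
    plansWithRowSums p = Set.univ.pi fun i => massSimplex (Fin N) (p i) := by
  ext π
  simp [plansWithRowSums, massSimplex, Set.mem_pi, forall_and]

theorem couplings_eq_sep_plansWithRowSums (p q : Fin N → ℝ) :
    couplings p q = {π ∈ plansWithRowSums p | ∑ i, π i = q} := by
  ext π
  simp [couplings, plansWithRowSums, funext_iff, and_assoc]

theorem sum_rows_mem_simplex {p : Fin N → ℝ} (hp : p ∈ simplex N) {π : Fin N → Fin N → ℝ}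
    (hπ : π ∈ plansWithRowSums p) : ∑ i, π i ∈ simplex N := by
  have col_sum_nonneg : 0 ≤ ∑ i, π i := Finset.sum_nonneg fun i _ => hπ.1 i
  refine ⟨col_sum_nonneg, ?_⟩
  simp only [Finset.sum_apply]
  rw [Finset.sum_comm, ← hp.2]
  exact Finset.sum_congr rfl fun i _ => hπ.2 i

theorem couplings_nonempty {p q : Fin N → ℝ} (hp : p ∈ simplex N) (hq : q ∈ simplex N) :
    (couplings p q).Nonempty := by
  refine ⟨fun i j => p i * q j, fun i j => mul_nonneg (hp.1 i) (hq.1 j), fun i => ?_, fun j => ?_⟩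
  · rw [← Finset.mul_sum, hq.2, mul_one]
  · rw [← Finset.sum_mul, hp.2, one_mul]

theorem isCompact_couplings (p q : Fin N → ℝ) : IsCompact (couplings p q) := by
  rw [couplings_eq_sep_plansWithRowSums, plansWithRowSums_eq_pi]
  exact (isCompact_univ_pi fun i => isCompact_massSimplex (p i)).inter_right
    (isClosed_eq (by fun_prop) continuous_const)

theorem frob_add_mul_entropy_eq_sum (c : Fin N → Fin N → ℝ) (γ : ℝ) (π : Fin N → Fin N → ℝ) :
    frob c π + γ * entropy π = ∑ i, entropicCost (c i) γ (π i) := by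
  simp only [frob, entropy, entropicCost, Finset.sum_add_distrib, Finset.mul_sum]

theorem isLeast_Wreg (c : Fin N → Fin N → ℝ) (γ : ℝ) {p q : Fin N → ℝ}
    (h : (couplings p q).Nonempty) :
    IsLeast ((fun π => frob c π + γ * entropy π) '' couplings p q) (Wreg c γ p q) := by
  have continuous_cost : Continuous fun π => frob c π + γ * entropy π := by
    simp only [frob_add_mul_entropy_eq_sum]
    exact continuous_finsetSum _ fun i _ =>
      (continuous_entropicCost (c i) γ).comp (continuous_apply i)
  exact ((isCompact_couplings p q).image continuous_cost).isLeast_sInf (h.image _)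

theorem isUniqMinOn_plansWithRowSums_gibbs (c : Fin N → Fin N → ℝ) {γ : ℝ} (hγ : 0 < γ)
    {p : Fin N → ℝ} (hp : ∀ i, 0 ≤ p i) :
    IsUniqMinOn (fun π => frob c π + γ * entropy π) (plansWithRowSums p)
      (fun i => gibbsVector (c i) γ (p i)) := by
  simp only [frob_add_mul_entropy_eq_sum, plansWithRowSums_eq_pi]
  refine IsUniqMinOn.sum_pi fun i => ?_
  have : Nonempty (Fin N) := ⟨i⟩
  exact isUniqMinOn_entropicCost_gibbsVector (c i) hγ (hp i)

theorem isUniqMinOn_Wreg_sum_rows {c : Fin N → Fin N → ℝ} {γ : ℝ} {p : Fin N → ℝ}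
    (hp : p ∈ simplex N) {π : Fin N → Fin N → ℝ}
    (hπ : IsUniqMinOn (fun π => frob c π + γ * entropy π) (plansWithRowSums p) π) :
    IsUniqMinOn (Wreg c γ p) (simplex N) (∑ i, π i) := by
  refine hπ.of_isLeast_fiber (g := fun ρ => ∑ i, ρ i) (sum_rows_mem_simplex hp hπ.1) fun q hq => ?_
  rw [← couplings_eq_sep_plansWithRowSums]
  exact isLeast_Wreg c γ (couplings_nonempty hp hq)

end Plans

theorem Wreg_not_minimized_at_diagonal_general {N : ℕ}
    (c : Fin N → Fin N → ℝ) (γ : ℝ) (hγ : 0 < γ)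
    (ξ : Fin N → Fin N → ℝ) (hξ : ∀ i j, ξ i j = Real.exp (-(c i j) / γ))
    (p : Fin N → ℝ) (hp : p ∈ simplex N) :
    IsUniqMinOn (fun π => frob c π + γ * entropy π)
      {π : Fin N → Fin N → ℝ | (∀ i j, 0 ≤ π i j) ∧ ∀ i, ∑ j, π i j = p i}
      (fun i j => p i / (∑ k, ξ i k) * ξ i j) ∧
    IsUniqMinOn (fun q => Wreg c γ p q) (simplex N)
      (fun j => ∑ i, ξ i j * (p i / ∑ k, ξ i k)) := by
  obtain rfl : ξ = fun i j => Real.exp (-(c i j) / γ) := funext₂ hξ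
  have plan_min := isUniqMinOn_plansWithRowSums_gibbs c hγ hp.1
  have marginal_eq : (∑ i, gibbsVector (c i) γ (p i)) = fun j => ∑ i,
      Real.exp (-(c i j) / γ) * (p i / ∑ k, Real.exp (-(c i k) / γ)) := by
    funext j
    simp only [Finset.sum_apply, gibbsVector, partitionFunction, mul_comm]
  exact ⟨plan_min, marginal_eq ▸ isUniqMinOn_Wreg_sum_rows hp plan_min⟩

/-- With `ξ = e^{-c/γ}` and `p ∈ Σ_N` with positive entries: (i) the unique minimizer
of `π ↦ ⟨c,π⟩ + γE(π)` over nonnegative matrices with row sums `p` is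
`π* = diag(p ⊘ ξ𝟙) ξ`; (ii) consequently `q ↦ W_γ(p,q)` attains its minimum over
`Σ_N` at the unique point `q* = ξᵀ(p ⊘ ξ𝟙)`. -/
theorem Wreg_not_minimized_at_diagonal {N : ℕ} (hN : 1 ≤ N)
    (c : Fin N → Fin N → ℝ) (γ : ℝ) (hγ : 0 < γ)
    (ξ : Fin N → Fin N → ℝ) (hξ : ∀ i j, ξ i j = Real.exp (-(c i j) / γ))
    (p : Fin N → ℝ) (hp : p ∈ simplex N) (hppos : ∀ i, 0 < p i) :
    IsUniqMinOn (fun π => frob c π + γ * entropy π)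
      {π : Fin N → Fin N → ℝ | (∀ i j, 0 ≤ π i j) ∧ ∀ i, ∑ j, π i j = p i}
      (fun i j => p i / (∑ k, ξ i k) * ξ i j) ∧
    IsUniqMinOn (fun q => Wreg c γ p q) (simplex N)
      (fun j => ∑ i, ξ i j * (p i / ∑ k, ξ i k)) :=
  Wreg_not_minimized_at_diagonal_general c γ hγ ξ hξ p hp
end
end
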